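/- For any element R in Z(D'(m|n)⊗U(gl(m|n))) = ℂ[E]⊗Z(U(gl(m|n))), the correspondence e_{ab} ↦ t_a∂_b⊗1 + 1⊗e_{ab} + δ_{ab}(−1)^{|a||b|}R (a,b∈I), e_{a0} ↦ t_a∂_0⊗1 − Σ_{j∈I}(−1)^{|a||j|}(t_j/t_0)⊗e_{aj} (a∈I), e_{0b} ↦ t_0∂_b⊗1 (b∈I), e_{00} ↦ t_0∂_0⊗1 + R extends by the universal property to a superalgebra homomorphism φ_R : U(gl(m+1|n)) → D'(m|n)⊗U(gl(m|n)). -/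

import Mathlib

set_option maxHeartbeats 1000000
set_option synthInstance.maxHeartbeats 400000

noncomputable section
open scoped TensorProduct

/-- The index set `I = {1,…,m,1̄,…,n̄}` of `gl(m|n)`; `Sum.inl` are the even
(unbarred) indices, `Sum.inr` the odd (barred) ones.  The index set
`Î = {0} ∪ I` of `gl(m+1|n)` is realized as `Ind (m+1) n`, with `0 = Sum.inl 0`. -/
abbrev Ind (m n : ℕ) := Fin m ⊕ Fin n

/-- Parity of an index, as `0` or `1`. -/
def pI {m n : ℕ} : Ind m n → ℕ := Sum.elim (fun _ => 0) (fun _ => 1)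

/-- The total order `1 < ⋯ < m < 1̄ < ⋯ < n̄` on `I` (and, with `m+1` in place of `m`,
the order `0 < 1 < ⋯ < m < 1̄ < ⋯ < n̄` on `Î`). -/
def iltI {m n : ℕ} : Ind m n → Ind m n → Prop
  | Sum.inl a, Sum.inl b => a < b
  | Sum.inl _, Sum.inr _ => True
  | Sum.inr _, Sum.inl _ => False
  | Sum.inr a, Sum.inr b => a < b

/-- The distinguished index `0` of `Î`. -/
def z0 {m n : ℕ} : Ind (m+1) n := Sum.inl 0

/-- The inclusion `I ↪ Î`. -/
def emb {m n : ℕ} : Ind m n → Ind (m+1) n := Sum.map Fin.succ id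

lemma emb_injective {m n : ℕ} : Function.Injective (emb (m := m) (n := n)) := by
  intro a b h
  cases a <;> cases b <;> simp [emb, Fin.succ_inj] at h <;> simp [h]

lemma emb_ne_z0 {m n : ℕ} (a : Ind m n) : emb a ≠ z0 := by
  cases a <;> simp [emb, z0, Fin.succ_ne_zero]

/-- Builds a linear map out of a space with basis `α` from a function on basis vectors. -/
def mkOp {α M : Type} [AddCommGroup M] [Module ℂ M] (g : α → M) : (α →₀ ℂ) →ₗ[ℂ] M :=
  Finsupp.lsum ℂ fun x => LinearMap.toSpanSingleton ℂ M (g x)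

/-- Number of odd variables occurring before position `i`. -/
def cntB {n : ℕ} (b : Fin n → Bool) (i : Fin n) : ℕ :=
  (Finset.univ.filter fun j => j < i ∧ b j = true).card

/-- Number of odd variables occurring. -/
def cntA {n : ℕ} (b : Fin n → Bool) : ℕ := (Finset.univ.filter fun j => b j = true).card


/-- The defining (super-)commutation relations of `gl`:
`e_ij e_kl − (−1)^{(|i|+|j|)(|k|+|l|)} e_kl e_ij = δ_jk e_il − (−1)^{(|i|+|j|)(|k|+|l|)} δ_li e_kj`. -/
inductive glRel (ι : Type) (p : ι → ℕ) [DecidableEq ι] :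
    FreeAlgebra ℂ (ι × ι) → FreeAlgebra ℂ (ι × ι) → Prop
  | basic (i j k l : ι) : glRel ι p
      (FreeAlgebra.ι ℂ (i, j) * FreeAlgebra.ι ℂ (k, l)
        - ((-1 : ℂ) ^ ((p i + p j) * (p k + p l))) •
            (FreeAlgebra.ι ℂ (k, l) * FreeAlgebra.ι ℂ (i, j)))
      ((if j = k then FreeAlgebra.ι ℂ (i, l) else 0)
        - ((-1 : ℂ) ^ ((p i + p j) * (p k + p l))) •
            (if l = i then FreeAlgebra.ι ℂ (k, j) else 0))

/-- The universal enveloping superalgebra of the general linear Lie superalgebra with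
index set `ι` and parity `p`, presented by generators `e_ij` and the super-commutator
relations. -/
abbrev UEA (ι : Type) (p : ι → ℕ) [DecidableEq ι] : Type := RingQuot (glRel ι p)

/-- The generator `e_ij` of `UEA ι p`. -/
def gen {ι : Type} (p : ι → ℕ) [DecidableEq ι] (i j : ι) : UEA ι p :=
  RingQuot.mkAlgHom ℂ (glRel ι p) (FreeAlgebra.ι ℂ (i, j))

/-- Monomials `t_0^{k} t^e t̄^b` of `F = ℂ[t_0^{±1},t_1,…,t_m] ⊗ Λ_n`. -/
abbrev FMon (m n : ℕ) := ℤ × (Fin m → ℕ) × (Fin n → Bool)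

/-- `F = ℂ[t_0^{±1},t_1,…,t_m] ⊗ Λ_n` as the vector space with basis the monomials. -/
abbrev FSp (m n : ℕ) : Type := FMon m n →₀ ℂ

/-- The basis monomial of `F` attached to `x`. -/
def fmono {m n : ℕ} (x : FMon m n) : FSp m n := Finsupp.single x 1

/-- Left multiplication by `t_i/t_0` for an even index `i ∈ {1,…,m}`. -/
def opDivE {m n : ℕ} (i : Fin m) : Module.End ℂ (FSp m n) :=
  mkOp fun x => fmono (x.1 - 1, Function.update x.2.1 i (x.2.1 i + 1), x.2.2)

/-- Left multiplication by `t_ī/t_0` for an odd index `ī`. -/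
def opDivO {m n : ℕ} (i : Fin n) : Module.End ℂ (FSp m n) :=
  mkOp fun x => if x.2.2 i then 0 else
    ((-1 : ℂ) ^ (cntB x.2.2 i)) • fmono (x.1 - 1, x.2.1, Function.update x.2.2 i true)

/-- The operator `t_0 ∂_0`. -/
def opPar0 {m n : ℕ} : Module.End ℂ (FSp m n) :=
  mkOp fun x => (x.1 : ℂ) • fmono x

/-- The operator `t_0 ∂_i` for an even index `i ∈ {1,…,m}`. -/
def opParE {m n : ℕ} (i : Fin m) : Module.End ℂ (FSp m n) :=
  mkOp fun x => (x.2.1 i : ℂ) • fmono (x.1 + 1, Function.update x.2.1 i (x.2.1 i - 1), x.2.2)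

/-- The operator `t_0 ∂_ī` for an odd index `ī`. -/
def opParO {m n : ℕ} (i : Fin n) : Module.End ℂ (FSp m n) :=
  mkOp fun x => if x.2.2 i then
    ((-1 : ℂ) ^ (cntB x.2.2 i)) • fmono (x.1 + 1, x.2.1, Function.update x.2.2 i false) else 0

/-- The multiplication operators `t_i/t_0`, `i ∈ I`. -/
def opDiv {m n : ℕ} : Ind m n → Module.End ℂ (FSp m n) := Sum.elim opDivE opDivO

/-- The operators `t_0 ∂_i`, `i ∈ Î`. -/
def opPar {m n : ℕ} : Ind (m+1) n → Module.End ℂ (FSp m n) :=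
  Sum.elim (Fin.cases opPar0 opParE) opParO

/-- The multiplication operators `t_i/t_0` for `i ∈ Î` (equal to `1` for `i = 0`). -/
def opDivB {m n : ℕ} : Ind (m+1) n → Module.End ℂ (FSp m n) :=
  Sum.elim (Fin.cases 1 opDivE) opDivO

/-- The generators of `D'(m|n)`. -/
def Dgens (m n : ℕ) : Set (Module.End ℂ (FSp m n)) := Set.range opDiv ∪ Set.range opPar

/-- The superalgebra `D'(m|n)` of differential operators on `F`, i.e. the subalgebra of
operators on `F` generated by `t_i/t_0` (`i ∈ I`) and `t_0∂_i` (`i ∈ Î`). -/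
def Dprime (m n : ℕ) : Subalgebra ℂ (Module.End ℂ (FSp m n)) := Algebra.adjoin ℂ (Dgens m n)

/-- `t_i/t_0` as an element of `D'(m|n)`. -/
def tdiv {m n : ℕ} (i : Ind m n) : Dprime m n :=
  ⟨opDiv i, Algebra.subset_adjoin (Or.inl ⟨i, rfl⟩)⟩

/-- `t_0∂_i` as an element of `D'(m|n)`. -/
def tpar {m n : ℕ} (i : Ind (m+1) n) : Dprime m n :=
  ⟨opPar i, Algebra.subset_adjoin (Or.inr ⟨i, rfl⟩)⟩

/-- `t_i/t_0` for `i ∈ Î` as an element of `D'(m|n)`. -/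
def tdivB {m n : ℕ} : Ind (m+1) n → Dprime m n :=
  Sum.elim (Fin.cases 1 fun i => tdiv (Sum.inl i)) fun i => tdiv (Sum.inr i)

/-- The operator `t_a∂_b = (t_a/t_0)(t_0∂_b)` of `D'(m|n)`, for `a, b ∈ Î`. -/
def tdel {m n : ℕ} (a b : Ind (m+1) n) : Dprime m n := tdivB a * tpar b

/-- The Euler operator `E = Σ_{i∈Î} t_i∂_i ∈ D'(m|n)`. -/
def En (m n : ℕ) : Dprime m n := ∑ i : Ind (m+1) n, tdel i i

noncomputable instance instDprimeRing (m n : ℕ) : Ring (Dprime m n) :=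
  @Subalgebra.toRing ℂ (Module.End ℂ (FSp m n)) inferInstance inferInstance inferInstance _

noncomputable instance instDprimeAlgebra (m n : ℕ) : Algebra ℂ (Dprime m n) :=
  @Subalgebra.algebra ℂ (Module.End ℂ (FSp m n)) inferInstance inferInstance inferInstance _

/-- The super tensor product `D'(m|n) ⊗ U(gl(m|n))`, axiomatized: an algebra `T` together
with algebra maps `d ↦ d⊗1`, `u ↦ 1⊗u`, such that the induced linear map
`D'(m|n) ⊗_ℂ U(gl(m|n)) → T` is a linear isomorphism and such that the Koszul sign rule
`(1⊗u)(d⊗1) = (−1)^{|u||d|}(d⊗1)(1⊗u)` holds on (super-)generators. -/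
structure SuperTensor (m n : ℕ) where
  T : Type
  [ringT : Ring T]
  [algT : Algebra ℂ T]
  inD : Dprime m n →ₐ[ℂ] T
  inU : UEA (Ind m n) pI →ₐ[ℂ] T
  equiv : ((Dprime m n) ⊗[ℂ] (UEA (Ind m n) pI)) ≃ₗ[ℂ] T
  equiv_tmul : ∀ (d : Dprime m n) (u : UEA (Ind m n) pI), equiv (d ⊗ₜ u) = inD d * inU u
  comm_div : ∀ (i j k : Ind m n),
    inU (gen pI i j) * inD (tdiv k) =
      ((-1 : ℂ) ^ ((pI i + pI j) * pI k)) • (inD (tdiv k) * inU (gen pI i j))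
  comm_par : ∀ (i j : Ind m n) (k : Ind (m+1) n),
    inU (gen pI i j) * inD (tpar k) =
      ((-1 : ℂ) ^ ((pI i + pI j) * pI k)) • (inD (tpar k) * inU (gen pI i j))

attribute [instance] SuperTensor.ringT SuperTensor.algT

/-- The predicate expressing that `φ : U(gl(m+1|n)) → D'(m|n) ⊗ U(gl(m|n))` is given on the
generators `e_ab` by the formulas of Theorem 3.1 (for the central element `R`). -/
def IsPhi {m n : ℕ} (ST : SuperTensor m n) (R : ST.T)
    (φ : UEA (Ind (m+1) n) pI →ₐ[ℂ] ST.T) : Prop :=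
  (∀ a b : Ind m n, φ (gen pI (emb a) (emb b)) =
      ST.inD (tdel (emb a) (emb b)) + ST.inU (gen pI a b)
        + (if a = b then ((-1 : ℂ) ^ (pI a * pI b)) • R else 0)) ∧
  (∀ a : Ind m n, φ (gen pI (emb a) z0) =
      ST.inD (tdel (emb a) z0)
        - ∑ j : Ind m n, ((-1 : ℂ) ^ (pI a * pI j)) • (ST.inD (tdiv j) * ST.inU (gen pI a j))) ∧
  (∀ b : Ind m n, φ (gen pI z0 (emb b)) = ST.inD (tdel z0 (emb b))) ∧
  (φ (gen pI z0 z0) = ST.inD (tdel z0 z0) + R)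

/-- The generating set of `U(sl(m+1|n))` inside `U(gl(m+1|n))`: the `e_ij` with `i ≠ j`
together with `e_00 − (−1)^{|a|} e_aa` for `a ∈ I`. -/
def slSet (m n : ℕ) : Set (UEA (Ind (m+1) n) pI) :=
  {x | (∃ i j : Ind (m+1) n, i ≠ j ∧ x = gen pI i j) ∨
    (∃ a : Ind m n, x = gen pI z0 z0 - ((-1 : ℂ) ^ (pI a)) • gen pI (emb a) (emb a))}

/-- `U(sl(m+1|n))`, realized as the subalgebra of `U(gl(m+1|n))` generated by `sl(m+1|n)`. -/
def Usl (m n : ℕ) : Subalgebra ℂ (UEA (Ind (m+1) n) pI) := Algebra.adjoin ℂ (slSet m n)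

lemma mem_gen_ne {m n : ℕ} {i j : Ind (m+1) n} (h : i ≠ j) : gen pI i j ∈ Usl m n :=
  Algebra.subset_adjoin (Or.inl ⟨i, j, h, rfl⟩)

lemma mem_h {m n : ℕ} (a : Ind m n) :
    gen pI z0 z0 - ((-1 : ℂ) ^ (pI a)) • gen pI (emb a) (emb a) ∈ Usl m n :=
  Algebra.subset_adjoin (Or.inr ⟨a, rfl⟩)

/-- The predicate expressing that `ψ : U(sl(m+1|n)) → D'(m|n) ⊗ U(gl(m|n))` is given on the
generators by the formulas of Corollary 3.2 (the homomorphism `φ^s`). -/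
def IsPhiS {m n : ℕ} (ST : SuperTensor m n) (ψ : Usl m n →ₐ[ℂ] ST.T) : Prop :=
  (∀ (a b : Ind m n) (h : a ≠ b),
    ψ ⟨gen pI (emb a) (emb b), mem_gen_ne fun he => h (emb_injective he)⟩ =
      ST.inD (tdel (emb a) (emb b)) + ST.inU (gen pI a b)) ∧
  (∀ a : Ind m n, ψ ⟨gen pI (emb a) z0, mem_gen_ne (emb_ne_z0 a)⟩ =
      ST.inD (tdel (emb a) z0)
        - ∑ j : Ind m n, ((-1 : ℂ) ^ (pI a * pI j)) • (ST.inD (tdiv j) * ST.inU (gen pI a j))) ∧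
  (∀ b : Ind m n, ψ ⟨gen pI z0 (emb b), mem_gen_ne (Ne.symm (emb_ne_z0 b))⟩ =
      ST.inD (tdel z0 (emb b))) ∧
  (∀ a : Ind m n, ψ ⟨gen pI z0 z0 - ((-1 : ℂ) ^ (pI a)) • gen pI (emb a) (emb a), mem_h a⟩ =
      ST.inD (tdel (m:=m) (n:=n) z0 z0 - ((-1 : ℂ) ^ (pI a)) • tdel (emb a) (emb a))
        - ((-1 : ℂ) ^ (pI a)) • ST.inU (gen pI a a))

/-- The first Gelfand invariant `G₁ = Σ_i e_ii`. -/
def G1 (ι : Type) (p : ι → ℕ) [DecidableEq ι] [Fintype ι] : UEA ι p := ∑ i : ι, gen p i i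

/-- The distinguished central element `R₁ = −(1/(m−n+1))(E⊗1 + 1⊗G₁)`. -/
def R1elt {m n : ℕ} (ST : SuperTensor m n) : ST.T :=
  -(1 / ((m : ℂ) - n + 1)) • (ST.inD (En m n) + ST.inU (G1 (Ind m n) pI))

/-!
The affine coordinates `X i = t_i/t_0` and the derivations `D j = t_0∂_j` give vector fields
`X i * D j` satisfying the relations of the elementary matrices of `gl(m+1|n)`. They are twisted
by a matrix `u` whose columns `j ≠ 0` carry the generators `1 ⊗ e_ab` of `gl(m|n)` and whose
column `0` is chosen so that `u` annihilates the vector `X`. In columns `j, l ≠ 0` the relations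
for `X i * D j + u i j` hold because `u` satisfies them there and supercommutes with `X` and `D`.
Contracted with `X` over the last column index, the defect of these relations vanishes; since
`X 0 = 1`, it vanishes in column `0` as soon as it does in the other columns, and by the
antisymmetry of the defect the same argument applies to the first column index. Finally, adding
`R` times the supertrace preserves the relations, because `R` is central and the supertrace
vanishes on superbrackets.
-/

/-- The Koszul sign `(-1)^{pq}` of exchanging elements of parities `p` and `q`. -/
def koszulSign (p q : ℕ) : ℂ := (-1) ^ (p * q)

lemma koszulSign_comm (p q : ℕ) : koszulSign p q = koszulSign q p := by
  rw [koszulSign, mul_comm, koszulSign]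

@[simp]
lemma koszulSign_zero_left (q : ℕ) : koszulSign 0 q = 1 := by simp [koszulSign]

@[simp]
lemma koszulSign_zero_right (p : ℕ) : koszulSign p 0 = 1 := by simp [koszulSign]

lemma koszulSign_add_left (p q r : ℕ) :
    koszulSign (p + q) r = koszulSign p r * koszulSign q r := by
  simp only [koszulSign, add_mul, pow_add]

lemma koszulSign_add_right (p q r : ℕ) :
    koszulSign p (q + r) = koszulSign p q * koszulSign p r := by
  simp only [koszulSign, mul_add, pow_add]

@[simp]
lemma koszulSign_mul_self (p q : ℕ) : koszulSign p q * koszulSign p q = 1 := by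
  rw [koszulSign, ← mul_pow]; simp

section SuperBracket

variable {A B : Type*} [Ring A] [Algebra ℂ A] [Ring B] [Algebra ℂ B]

/-- The superbracket `xy - (-1)^{pq} yx` of elements `x`, `y` of parities `p`, `q`. The parities
are arguments, since the algebra `A` carries no grading. -/
def superBracket (p q : ℕ) : A →ₗ[ℂ] A →ₗ[ℂ] A :=
  LinearMap.mul ℂ A - koszulSign p q • (LinearMap.mul ℂ A).flip

lemma superBracket_apply (p q : ℕ) (x y : A) :
    superBracket p q x y = x * y - koszulSign p q • (y * x) := rfl

lemma superBracket_eq_zero_iff {p q : ℕ} {x y : A} :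
    superBracket p q x y = 0 ↔ x * y = koszulSign p q • (y * x) := sub_eq_zero

lemma superBracket_zero_left (q : ℕ) (x y : A) : superBracket 0 q x y = x * y - y * x := by
  simp [superBracket_apply]

lemma superBracket_zero_right (p : ℕ) (x y : A) : superBracket p 0 x y = x * y - y * x := by
  simp [superBracket_apply]

lemma superBracket_one_one (x y : A) : superBracket 1 1 x y = x * y + y * x := by
  simp [superBracket_apply, koszulSign]

lemma superBracket_swap (p q : ℕ) (x y : A) :
    superBracket q p y x = -(koszulSign p q • superBracket p q x y) := by
  rw [superBracket_apply, superBracket_apply, koszulSign_comm q p, smul_sub, smul_smul,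
    koszulSign_mul_self, one_smul, neg_sub]

lemma superBracket_mul_right (p q r : ℕ) (x y z : A) :
    superBracket p (q + r) x (y * z) =
      superBracket p q x y * z + koszulSign p q • (y * superBracket p r x z) := by
  simp only [superBracket_apply, koszulSign_add_right, sub_mul, mul_sub, smul_sub, mul_smul_comm,
    smul_mul_assoc, smul_smul, mul_assoc]
  abel

lemma superBracket_mul_left (p q r : ℕ) (x y z : A) :
    superBracket (p + q) r (x * y) z =
      x * superBracket q r y z + koszulSign q r • (superBracket p r x z * y) := by
  simp only [superBracket_apply, koszulSign_add_left, sub_mul, mul_sub, smul_sub, mul_smul_comm,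
    smul_mul_assoc, smul_smul, mul_assoc, mul_comm (koszulSign p r)]
  abel

lemma superBracket_add_add_self (p q r : ℕ) :
    (superBracket p (r + (q + r)) : A →ₗ[ℂ] A →ₗ[ℂ] A) = superBracket p q := by
  have h : koszulSign p (r + (q + r)) = koszulSign p q := by
    rw [koszulSign_add_right, koszulSign_add_right, mul_left_comm, koszulSign_mul_self, mul_one]
  rw [superBracket, h, superBracket]

lemma superBracket_add_self_eq_zero {x y : A} (h : Commute x y) (p q : ℕ) :
    superBracket p (q + q) x y = 0 := by
  rw [superBracket_eq_zero_iff, koszulSign_add_right, koszulSign_mul_self, one_smul, h.eq]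

lemma map_superBracket (f : A →ₐ[ℂ] B) (p q : ℕ) (x y : A) :
    f (superBracket p q x y) = superBracket p q (f x) (f y) := by
  simp only [superBracket_apply, map_sub, map_mul, map_smul]

end SuperBracket

section GlFamily

variable {κ : Type} [DecidableEq κ] {A B : Type*} [Ring A] [Algebra ℂ A] [Ring B] [Algebra ℂ B]

/-- The bracket `[e_ij, e_kl]` of elementary matrices of the general linear Lie superalgebra with
parity `p`, with the family `g` substituted for the elementary matrices. -/
def glBracket (p : κ → ℕ) (g : κ → κ → A) (i j k l : κ) : A :=
  (if j = k then g i l else 0)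
    - koszulSign (p i + p j) (p k + p l) • (if l = i then g k j else 0)

lemma glBracket_add (p : κ → ℕ) (g h : κ → κ → A) (i j k l : κ) :
    glBracket p (fun i j => g i j + h i j) i j k l =
      glBracket p g i j k l + glBracket p h i j k l := by
  have hite (P : Prop) [Decidable P] (x y : A) :
      (if P then x + y else 0) = (if P then x else 0) + if P then y else 0 := by
    split_ifs <;> simp
  simp only [glBracket, hite]
  module

lemma glBracket_swap (p : κ → ℕ) (g : κ → κ → A) (i j k l : κ) :
    glBracket p g k l i j = -(koszulSign (p i + p j) (p k + p l) • glBracket p g i j k l) := by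
  rw [glBracket, glBracket, koszulSign_comm (p k + p l), smul_sub, smul_smul,
    koszulSign_mul_self, one_smul, neg_sub]

lemma map_glBracket (f : A →ₐ[ℂ] B) (p : κ → ℕ) (g : κ → κ → A) (i j k l : κ) :
    f (glBracket p g i j k l) = glBracket p (fun i j => f (g i j)) i j k l := by
  simp only [glBracket, map_sub, map_smul, apply_ite f, map_zero]

-- `e_ij ↦ δ_ij (-1)^{|i||j|}` is the supertrace, which vanishes on superbrackets.
lemma glBracket_diagonal (p : κ → ℕ) (R : A) (i j k l : κ) :
    glBracket p (fun i j => if i = j then koszulSign (p i) (p j) • R else 0) i j k l = 0 := by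
  by_cases hjk : j = k
  · subst hjk
    by_cases hil : i = l
    · subst hil
      have hsign : koszulSign (p i + p j) (p j + p i) * koszulSign (p j) (p j) =
          koszulSign (p i) (p i) := by
        grind [koszulSign_add_left, koszulSign_add_right, koszulSign_comm, koszulSign_mul_self]
      simp [glBracket, smul_smul, hsign]
    · simp [glBracket, hil, Ne.symm hil]
  · simp [glBracket, hjk, Ne.symm hjk]

/-- The failure of the family `g` to satisfy the supercommutation relations of the elementary
matrices `e_ij`. -/
def glDefect (p : κ → ℕ) (g : κ → κ → A) (i j k l : κ) : A :=
  superBracket (p i + p j) (p k + p l) (g i j) (g k l) - glBracket p g i j k l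

lemma glDefect_swap (p : κ → ℕ) (g : κ → κ → A) (i j k l : κ) :
    glDefect p g k l i j = -(koszulSign (p i + p j) (p k + p l) • glDefect p g i j k l) := by
  rw [glDefect, glDefect, superBracket_swap, glBracket_swap]
  module

/-- The family `g` satisfies the supercommutation relations of the elementary matrices `e_ij` of
the general linear Lie superalgebra with index set `κ` and parity `p`. -/
def IsGlFamily (p : κ → ℕ) (g : κ → κ → A) : Prop :=
  ∀ i j k l, superBracket (p i + p j) (p k + p l) (g i j) (g k l) = glBracket p g i j k l

namespace IsGlFamily

variable {p : κ → ℕ} {g : κ → κ → A}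

lemma map (hg : IsGlFamily p g) (f : A →ₐ[ℂ] B) : IsGlFamily p fun i j => f (g i j) :=
  fun i j k l => by rw [← map_superBracket, hg, map_glBracket]

lemma exists_algHom (hg : IsGlFamily p g) :
    ∃ φ : UEA κ p →ₐ[ℂ] A, ∀ i j, φ (gen p i j) = g i j := by
  let F : FreeAlgebra ℂ (κ × κ) →ₐ[ℂ] A := FreeAlgebra.lift ℂ fun ij => g ij.1 ij.2
  have hF : ∀ ⦃x y⦄, glRel κ p x y → F x = F y := by
    rintro _ _ ⟨i, j, k, l⟩
    simpa [F, superBracket_apply, glBracket, koszulSign, apply_ite F] using hg i j k l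
  exact ⟨RingQuot.liftAlgHom ℂ ⟨F, hF⟩, fun i j => by
    simp only [gen, RingQuot.liftAlgHom_mkAlgHom_apply, F, FreeAlgebra.lift_ι_apply]⟩

lemma add_diagonal (hg : IsGlFamily p g) {R : A} (hR : ∀ i j, Commute (g i j) R) :
    IsGlFamily p fun i j => g i j + if i = j then koszulSign (p i) (p j) • R else 0 := by
  intro i j k l
  set r : κ → κ → A := fun i j => if i = j then koszulSign (p i) (p j) • R else 0 with hr
  have bracket_r (q : ℕ) {x : A} (hx : Commute x R) (k l : κ) :
      superBracket q (p k + p l) x (r k l) = 0 := by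
    rcases eq_or_ne k l with rfl | hkl
    · simp [hr, superBracket_add_self_eq_zero hx]
    · simp [hr, hkl]
  have r_bracket_g : superBracket (p i + p j) (p k + p l) (r i j) (g k l) = 0 := by
    rw [superBracket_swap, bracket_r _ (hR k l), smul_zero, neg_zero]
  have commute_add_r : Commute (g i j + r i j) R := by
    refine (hR i j).add_left ?_
    rcases eq_or_ne i j with rfl | hij
    · simpa [hr] using (Commute.refl R).smul_left (koszulSign (p i) (p i))
    · simp [hr, hij]
  calc superBracket (p i + p j) (p k + p l) (g i j + r i j) (g k l + r k l)
      = superBracket (p i + p j) (p k + p l) (g i j) (g k l) := by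
        rw [map_add, bracket_r _ commute_add_r, add_zero, map_add, LinearMap.add_apply,
          r_bracket_g, add_zero]
    _ = glBracket p (fun i j => g i j + r i j) i j k l := by
        rw [hg, glBracket_add, glBracket_diagonal, add_zero]

end IsGlFamily

lemma isGlFamily_gen (p : κ → ℕ) : IsGlFamily p (gen p) := by
  intro i j k l
  have h := RingQuot.mkAlgHom_rel ℂ (glRel.basic (p := p) i j k l)
  simpa [superBracket_apply, glBracket, gen, koszulSign,
    apply_ite (RingQuot.mkAlgHom ℂ (glRel κ p))] using h

end GlFamily

section Affine

variable {κ : Type} [DecidableEq κ] {A B : Type*} [Ring A] [Algebra ℂ A] [Ring B] [Algebra ℂ B]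

/-- The relations of the coordinates `X i = t_i/t_o` and the derivations `D i = t_o∂_i` on the
affine chart `t_o ≠ 0` of a projective superspace with homogeneous coordinates `t_i`, `i ∈ κ`. -/
structure IsAffineWeylPair (p : κ → ℕ) (o : κ) (X D : κ → A) : Prop where
  parity_base : p o = 0
  X_base : X o = 1
  X_X : ∀ i k, superBracket (p i) (p k) (X i) (X k) = 0
  D_X : ∀ i k, superBracket (p i) (p k) (D i) (X k) =
    (if i = k then 1 else 0) - if i = o then X k else 0
  D_D : ∀ i k, superBracket (p i) (p k) (D i) (D k) =
    (if i = o then D k else 0) - if k = o then D i else 0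

namespace IsAffineWeylPair

variable {p : κ → ℕ} {o : κ} {X D : κ → A}

lemma map (h : IsAffineWeylPair p o X D) (f : A →ₐ[ℂ] B) :
    IsAffineWeylPair p o (fun i => f (X i)) fun i => f (D i) where
  parity_base := h.parity_base
  X_base := by rw [h.X_base, map_one]
  X_X i k := by rw [← map_superBracket, h.X_X, map_zero]
  D_X i k := by rw [← map_superBracket, h.D_X]; simp [apply_ite f]
  D_D i k := by rw [← map_superBracket, h.D_D]; simp [apply_ite f]

lemma of_map {f : A →ₐ[ℂ] B} (hf : Function.Injective f)
    (h : IsAffineWeylPair p o (fun i => f (X i)) fun i => f (D i)) :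
    IsAffineWeylPair p o X D where
  parity_base := h.parity_base
  X_base := hf (by rw [h.X_base, map_one])
  X_X i k := hf (by rw [map_superBracket, h.X_X, map_zero])
  D_X i k := hf (by rw [map_superBracket, h.D_X]; simp [apply_ite f])
  D_D i k := hf (by rw [map_superBracket, h.D_D]; simp [apply_ite f])

lemma X_mul_X (h : IsAffineWeylPair p o X D) (i k : κ) :
    X i * X k = koszulSign (p i) (p k) • (X k * X i) :=
  superBracket_eq_zero_iff.mp (h.X_X i k)

lemma D_bracket_vectorField (h : IsAffineWeylPair p o X D) (j k l : κ) :
    superBracket (p j) (p k + p l) (D j) (X k * D l) =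
      (if j = k then D l else 0) - if l = o then koszulSign (p j) (p k) • (X k * D j) else 0 := by
  rw [superBracket_mul_right, h.D_X, h.D_D]
  by_cases hj : j = o
  · subst hj
    simp [h.parity_base, sub_mul, mul_sub]
  · simp [hj, sub_eq_add_neg, smul_ite]

lemma X_bracket_vectorField (h : IsAffineWeylPair p o X D) (i k l : κ) :
    superBracket (p i) (p k + p l) (X i) (X k * D l) =
      -(koszulSign (p i) (p k + p l) •
        (X k * ((if l = i then 1 else 0) - if l = o then X i else 0))) := by
  rw [superBracket_mul_right, h.X_X, superBracket_swap (p l) (p i), h.D_X,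
    koszulSign_comm (p l), koszulSign_add_right]
  simp only [zero_mul, zero_add, mul_neg, mul_smul_comm, smul_neg, smul_smul]

theorem isGlFamily_vectorField (h : IsAffineWeylPair p o X D) :
    IsGlFamily p fun i j => X i * D j := by
  intro i j k l
  have hXX : X i * (X k * D j) = koszulSign (p i) (p k) • (X k * (X i * D j)) := by
    rw [← mul_assoc, h.X_mul_X i k, smul_mul_assoc, mul_assoc]
  rw [superBracket_mul_left, h.D_bracket_vectorField, h.X_bracket_vectorField]
  simp only [glBracket, koszulSign_add_left]
  rcases eq_or_ne l o with rfl | hl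
  · simp only [if_true, h.parity_base, add_zero, mul_sub, sub_mul, smul_sub, mul_ite, ite_mul,
      mul_one, mul_zero, zero_mul, mul_smul_comm, neg_mul, smul_mul_assoc,
      mul_assoc, hXX]
    module
  · simp only [if_neg hl, sub_zero, mul_ite, ite_mul, mul_one, mul_zero, zero_mul, neg_mul,
      smul_mul_assoc]
    module

end IsAffineWeylPair

/-- A matrix `u` twisting the vector fields `X i * D j` as in the Shen-Larsson construction:
its columns `j ≠ o` supercommute with all `X` and `D` and satisfy the relations of the elementary
matrices, and its column `o` is determined by the requirement that the matrix annihilate the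
column of affine coordinates `X`. -/
structure IsTwistingMatrix [Fintype κ] (p : κ → ℕ) (o : κ) (X D : κ → A) (u : κ → κ → A) :
    Prop extends IsAffineWeylPair p o X D where
  sum_row : ∀ k, ∑ l, koszulSign (p k) (p l) • (X l * u k l) = 0
  X_u : ∀ i k l, l ≠ o → superBracket (p i) (p k + p l) (X i) (u k l) = 0
  D_u : ∀ j k l, l ≠ o → superBracket (p j) (p k + p l) (D j) (u k l) = 0
  u_u : ∀ i j k l, j ≠ o → l ≠ o →
    superBracket (p i + p j) (p k + p l) (u i j) (u k l) = glBracket p u i j k l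

namespace IsTwistingMatrix

variable [Fintype κ] {p : κ → ℕ} {o : κ} {X D : κ → A} {u : κ → κ → A}

lemma eq_zero_of_sum_eq_zero (h : IsTwistingMatrix p o X D u) {c : κ → ℂ} {Φ : κ → A}
    (hc : c o = 1) (hΦ : ∀ l, l ≠ o → Φ l = 0) (hsum : ∑ l, c l • (X l * Φ l) = 0) (l : κ) :
    Φ l = 0 := by
  rw [Finset.sum_eq_single o (fun l _ hl => by rw [hΦ l hl, mul_zero, smul_zero]) (by simp), hc,
    one_smul, h.X_base, one_mul] at hsum
  rcases eq_or_ne l o with rfl | hl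
  exacts [hsum, hΦ l hl]

lemma sum_bracket_row (h : IsTwistingMatrix p o X D u) (q : ℕ) (y : A) (k : κ) :
    ∑ l, (koszulSign (p k) (p l) * koszulSign q (p l)) •
        (X l * superBracket q (p k + p l) y (u k l)) =
      -∑ l, koszulSign (p k) (p l) • (superBracket q (p l) y (X l) * u k l) := by
  have h0 := congrArg (superBracket q (p k) y) (h.sum_row k)
  rw [map_zero, map_sum] at h0
  rw [eq_neg_iff_add_eq_zero, ← h0, ← Finset.sum_add_distrib]
  refine Finset.sum_congr rfl fun l _ => ?_
  rw [map_smul, ← superBracket_add_add_self q (p k) (p l), superBracket_mul_right]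
  module

lemma X_bracket_u (h : IsTwistingMatrix p o X D u) (i k l : κ) :
    superBracket (p i) (p k + p l) (X i) (u k l) = 0 := by
  refine h.eq_zero_of_sum_eq_zero (c := fun l => koszulSign (p k) (p l) * koszulSign (p i) (p l))
    (Φ := fun l => superBracket (p i) (p k + p l) (X i) (u k l)) (by simp [h.parity_base])
    (fun l hl => h.X_u i k l hl) ?_ l
  rw [h.sum_bracket_row]
  simp [h.X_X]

lemma D_bracket_u (h : IsTwistingMatrix p o X D u) (j k l : κ) :
    superBracket (p j) (p k + p l) (D j) (u k l) =
      -(if l = o then koszulSign (p j) (p k) • u k j else 0) := by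
  rw [← add_eq_zero_iff_eq_neg]
  refine h.eq_zero_of_sum_eq_zero (c := fun l => koszulSign (p k) (p l) * koszulSign (p j) (p l))
    (Φ := fun l => superBracket (p j) (p k + p l) (D j) (u k l) +
      if l = o then koszulSign (p j) (p k) • u k j else 0) (by simp [h.parity_base])
    (fun l hl => by rw [h.D_u j k l hl, if_neg hl, add_zero]) ?_ l
  have hX : ∑ l, koszulSign (p k) (p l) • (superBracket (p j) (p l) (D j) (X l) * u k l) =
      koszulSign (p k) (p j) • u k j := by
    rcases eq_or_ne j o with rfl | hj
    · simp [h.D_X, sub_mul, smul_sub, h.sum_row]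
    · simp [h.D_X, hj]
  simp only [mul_add, smul_add, Finset.sum_add_distrib, h.sum_bracket_row, hX]
  simp [h.parity_base, h.X_base, koszulSign_comm]

lemma u_bracket_X (h : IsTwistingMatrix p o X D u) (i j l : κ) :
    superBracket (p i + p j) (p l) (u i j) (X l) = 0 := by
  rw [superBracket_swap, h.X_bracket_u, smul_zero, neg_zero]

lemma vectorField_bracket_u (h : IsTwistingMatrix p o X D u) (i j k l : κ) :
    superBracket (p i + p j) (p k + p l) (X i * D j) (u k l) =
      -(if l = o then koszulSign (p j) (p k) • (X i * u k j) else 0) := by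
  rw [superBracket_mul_left, h.D_bracket_u, h.X_bracket_u]
  simp

lemma u_bracket_vectorField (h : IsTwistingMatrix p o X D u) (i j k l : κ) :
    superBracket (p i + p j) (p k + p l) (u i j) (X k * D l) =
      koszulSign (p i + p j) (p k + p l) •
        if j = o then koszulSign (p l) (p i) • (X k * u i l) else 0 := by
  rw [superBracket_swap, h.vectorField_bracket_u, koszulSign_comm, smul_neg, neg_neg]

lemma sum_glBracket (h : IsTwistingMatrix p o X D u) (i j k : κ) :
    ∑ l, (koszulSign (p k) (p l) * koszulSign (p i + p j) (p l)) • (X l * glBracket p u i j k l) =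
      -(koszulSign (p j) (p k) • (X i * u k j)) := by
  have contract_left : ∑ l, (koszulSign (p k) (p l) * koszulSign (p i + p j) (p l)) •
      (X l * if j = k then u i l else 0) = 0 := by
    by_cases hjk : j = k
    · subst hjk
      rw [← h.sum_row i]
      refine Finset.sum_congr rfl fun l _ => ?_
      rw [if_pos rfl, koszulSign_add_left, mul_left_comm, koszulSign_mul_self, mul_one]
    · simp [hjk]
  have sign_eq : koszulSign (p k) (p i) * koszulSign (p i + p j) (p i) *
      koszulSign (p i + p j) (p k + p i) = koszulSign (p j) (p k) := by
    grind [koszulSign_add_left, koszulSign_add_right, koszulSign_comm, koszulSign_mul_self]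
  simp only [glBracket, mul_sub, smul_sub, Finset.sum_sub_distrib]
  rw [contract_left, zero_sub]
  simp only [mul_smul_comm, smul_smul, mul_ite, mul_zero, smul_ite, smul_zero,
    Finset.sum_ite_eq', Finset.mem_univ, if_true, sign_eq]

lemma sum_vectorField_bracket (h : IsTwistingMatrix p o X D u) (i j k : κ) :
    ∑ l, (koszulSign (p k) (p l) * koszulSign (p i + p j) (p l)) •
        (X l * superBracket (p i + p j) (p k + p l) (X i * D j) (u k l)) =
      -(koszulSign (p j) (p k) • (X i * u k j)) := by
  simp [h.vectorField_bracket_u, h.parity_base, h.X_base]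

lemma sum_bracket_vectorField (h : IsTwistingMatrix p o X D u) (i j k : κ) :
    ∑ l, (koszulSign (p k) (p l) * koszulSign (p i + p j) (p l)) •
      (X l * superBracket (p i + p j) (p k + p l) (u i j) (X k * D l)) = 0 := by
  have term_eq (l : κ) : (koszulSign (p k) (p l) * koszulSign (p i + p j) (p l)) • (X l *
      superBracket (p i + p j) (p k + p l) (u i j) (X k * D l)) =
      if j = o then koszulSign (p i + p j) (p k) •
        (X k * (koszulSign (p i) (p l) • (X l * u i l))) else 0 := by
    rw [h.u_bracket_vectorField]
    split_ifs
    · have sign_eq : koszulSign (p k) (p l) * koszulSign (p i + p j) (p l) *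
          (koszulSign (p i + p j) (p k + p l) * (koszulSign (p l) (p i) * koszulSign (p l) (p k)))
          = koszulSign (p i + p j) (p k) * koszulSign (p i) (p l) := by
        grind [koszulSign_add_right, koszulSign_comm, koszulSign_mul_self]
      simp only [mul_smul_comm, ← mul_assoc, h.X_mul_X l k, smul_mul_assoc, smul_smul]
      rw [← sign_eq]
      simp only [mul_assoc]
    · simp
  simp only [term_eq]
  split_ifs
  · rw [← Finset.smul_sum, ← Finset.mul_sum, h.sum_row, mul_zero, smul_zero]
  · simp

lemma glDefect_vectorField_add (h : IsTwistingMatrix p o X D u) (i j k l : κ) :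
    glDefect p (fun i j => X i * D j + u i j) i j k l =
      superBracket (p i + p j) (p k + p l) (u i j) (u k l)
        + superBracket (p i + p j) (p k + p l) (X i * D j) (u k l)
        + superBracket (p i + p j) (p k + p l) (u i j) (X k * D l) - glBracket p u i j k l := by
  simp only [glDefect, glBracket_add, map_add, LinearMap.add_apply,
    h.isGlFamily_vectorField i j k l]
  abel

lemma glDefect_eq_zero_of_ne (h : IsTwistingMatrix p o X D u) (i k : κ) {j l : κ} (hj : j ≠ o)
    (hl : l ≠ o) : glDefect p (fun i j => X i * D j + u i j) i j k l = 0 := by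
  rw [h.glDefect_vectorField_add, h.u_u i j k l hj hl, h.vectorField_bracket_u,
    h.u_bracket_vectorField]
  simp [hj, hl]

lemma sum_glDefect (h : IsTwistingMatrix p o X D u) (i j k : κ) :
    ∑ l, (koszulSign (p k) (p l) * koszulSign (p i + p j) (p l)) •
      (X l * glDefect p (fun i j => X i * D j + u i j) i j k l) = 0 := by
  have sum_u_bracket : ∑ l, (koszulSign (p k) (p l) * koszulSign (p i + p j) (p l)) •
      (X l * superBracket (p i + p j) (p k + p l) (u i j) (u k l)) = 0 := by
    simp [h.sum_bracket_row, h.u_bracket_X]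
  simp only [h.glDefect_vectorField_add, mul_add, mul_sub, smul_add, smul_sub,
    Finset.sum_add_distrib, Finset.sum_sub_distrib]
  rw [sum_u_bracket, h.sum_vectorField_bracket, h.sum_bracket_vectorField, h.sum_glBracket]
  abel

lemma glDefect_eq_zero_of_column (h : IsTwistingMatrix p o X D u) {i j k : κ}
    (hcol : ∀ l, l ≠ o → glDefect p (fun i j => X i * D j + u i j) i j k l = 0) (l : κ) :
    glDefect p (fun i j => X i * D j + u i j) i j k l = 0 :=
  h.eq_zero_of_sum_eq_zero (by simp [h.parity_base]) hcol (h.sum_glDefect i j k) l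

theorem isGlFamily_vectorField_add (h : IsTwistingMatrix p o X D u) :
    IsGlFamily p fun i j => X i * D j + u i j := by
  have defect_eq_zero_of_left_ne (i j k l : κ) (hj : j ≠ o) :
      glDefect p (fun i j => X i * D j + u i j) i j k l = 0 :=
    h.glDefect_eq_zero_of_column (fun l hl => h.glDefect_eq_zero_of_ne i k hj hl) l
  refine fun i j k l => sub_eq_zero.mp (h.glDefect_eq_zero_of_column (fun l hl => ?_) l)
  rw [glDefect_swap, defect_eq_zero_of_left_ne k l i j hl, smul_zero, neg_zero]

end IsTwistingMatrix

end Affine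

section Index

variable {m n : ℕ} {A : Type*} [Ring A] [Algebra ℂ A]

lemma ind_cases {P : Ind (m + 1) n → Prop} (h0 : P z0) (h1 : ∀ a : Ind m n, P (emb a)) :
    ∀ i, P i := by
  rintro (i | i)
  · exact i.cases h0 fun i => h1 (Sum.inl i)
  · exact h1 (Sum.inr i)

lemma pI_z0 : pI (z0 : Ind (m + 1) n) = 0 := rfl

lemma pI_emb (a : Ind m n) : pI (emb a) = pI a := by cases a <;> rfl

lemma isAffineWeylPair_of_emb {X D : Ind (m + 1) n → A} (X_base : X z0 = 1)
    (X_X : ∀ a b : Ind m n, superBracket (pI a) (pI b) (X (emb a)) (X (emb b)) = 0)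
    (D_X : ∀ a b : Ind m n,
      superBracket (pI a) (pI b) (D (emb a)) (X (emb b)) = if a = b then 1 else 0)
    (D_D : ∀ a b : Ind m n, superBracket (pI a) (pI b) (D (emb a)) (D (emb b)) = 0)
    (base_X : ∀ a : Ind m n, D z0 * X (emb a) - X (emb a) * D z0 = -X (emb a))
    (base_D : ∀ a : Ind m n, D z0 * D (emb a) - D (emb a) * D z0 = D (emb a)) :
    IsAffineWeylPair pI z0 X D where
  parity_base := pI_z0
  X_base := X_base
  X_X i k := by
    cases i using ind_cases <;> cases k using ind_cases <;>
      simp [pI_z0, pI_emb, superBracket_zero_left, superBracket_zero_right, X_base, X_X]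
  D_X i k := by
    cases i using ind_cases <;> cases k using ind_cases <;>
      simp [pI_z0, pI_emb, superBracket_zero_left, superBracket_zero_right, X_base, D_X, base_X,
        emb_ne_z0, (emb_ne_z0 _).symm, emb_injective.eq_iff]
  D_D i k := by
    cases i using ind_cases <;> cases k using ind_cases
    case h1.h0 a =>
      simp [pI_z0, superBracket_zero_right, emb_ne_z0, ← neg_sub (D z0 * D (emb a)), base_D]
    all_goals
      simp [pI_z0, pI_emb, superBracket_zero_left, D_D, base_D, emb_ne_z0]

end Index

section Operators

variable {m n : ℕ}

lemma mkOp_fmono {M : Type} [AddCommGroup M] [Module ℂ M] (g : FMon m n → M) (x : FMon m n) :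
    mkOp g (fmono x) = g x := by
  simp [mkOp, fmono]

lemma end_ext_fmono {f g : Module.End ℂ (FSp m n)} (h : ∀ x, f (fmono x) = g (fmono x)) :
    f = g :=
  Finsupp.lhom_ext' fun x => LinearMap.ext_ring (h x)

lemma opDivE_fmono (i : Fin m) (k : ℤ) (e : Fin m → ℕ) (b : Fin n → Bool) :
    opDivE i (fmono (k, e, b)) = fmono (k - 1, Function.update e i (e i + 1), b) :=
  mkOp_fmono _ _

lemma opDivO_fmono (i : Fin n) (k : ℤ) (e : Fin m → ℕ) (b : Fin n → Bool) :
    opDivO i (fmono (k, e, b)) =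
      if b i then 0 else (-1 : ℂ) ^ cntB b i • fmono (k - 1, e, Function.update b i true) :=
  mkOp_fmono _ _

lemma opPar0_fmono (k : ℤ) (e : Fin m → ℕ) (b : Fin n → Bool) :
    opPar0 (fmono (k, e, b)) = (k : ℂ) • fmono (k, e, b) :=
  mkOp_fmono _ _

lemma opParE_fmono (i : Fin m) (k : ℤ) (e : Fin m → ℕ) (b : Fin n → Bool) :
    opParE i (fmono (k, e, b)) =
      (e i : ℂ) • fmono (k + 1, Function.update e i (e i - 1), b) :=
  mkOp_fmono _ _

lemma opParO_fmono (i : Fin n) (k : ℤ) (e : Fin m → ℕ) (b : Fin n → Bool) :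
    opParO i (fmono (k, e, b)) =
      if b i then (-1 : ℂ) ^ cntB b i • fmono (k + 1, e, Function.update b i false) else 0 :=
  mkOp_fmono _ _

lemma commute_opDivE (i j : Fin m) : Commute (opDivE i : Module.End ℂ (FSp m n)) (opDivE j) := by
  refine end_ext_fmono fun ⟨k, e, b⟩ => ?_
  rcases eq_or_ne i j with rfl | h
  · rfl
  · simp [opDivE_fmono, h, h.symm, Function.update_comm h]

lemma commute_opParE (i j : Fin m) : Commute (opParE i : Module.End ℂ (FSp m n)) (opParE j) := by
  refine end_ext_fmono fun ⟨k, e, b⟩ => ?_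
  rcases eq_or_ne i j with rfl | h
  · rfl
  · simp [opParE_fmono, h, h.symm, Function.update_comm h, smul_smul, mul_comm]

lemma opParE_bracket_opDivE (i j : Fin m) :
    opParE i * opDivE j - opDivE j * opParE i =
      (if i = j then 1 else 0 : Module.End ℂ (FSp m n)) := by
  refine end_ext_fmono fun ⟨k, e, b⟩ => ?_
  rcases eq_or_ne i j with rfl | h
  · rcases Nat.eq_zero_or_pos (e i) with h0 | h0
    · have hupdate : Function.update e i 0 = e := Function.update_eq_self_iff.mpr h0.symm
      simp [opParE_fmono, opDivE_fmono, h0, hupdate]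
    · simp [opParE_fmono, opDivE_fmono, Nat.sub_add_cancel h0, add_smul]
  · simp [opParE_fmono, opDivE_fmono, h, h.symm, Function.update_comm h]

lemma commute_opDivE_opDivO (i : Fin m) (j : Fin n) : Commute (opDivE i) (opDivO j) := by
  refine end_ext_fmono fun ⟨k, e, b⟩ => ?_
  by_cases hb : b j <;> simp [opDivE_fmono, opDivO_fmono, hb]

lemma commute_opParE_opParO (i : Fin m) (j : Fin n) : Commute (opParE i) (opParO j) := by
  refine end_ext_fmono fun ⟨k, e, b⟩ => ?_
  by_cases hb : b j <;> simp [opParE_fmono, opParO_fmono, hb, smul_smul, mul_comm]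

lemma commute_opParE_opDivO (i : Fin m) (j : Fin n) : Commute (opParE i) (opDivO j) := by
  refine end_ext_fmono fun ⟨k, e, b⟩ => ?_
  by_cases hb : b j <;> simp [opParE_fmono, opDivO_fmono, hb, smul_smul, mul_comm]

lemma commute_opParO_opDivE (i : Fin n) (j : Fin m) : Commute (opParO i) (opDivE j) := by
  refine end_ext_fmono fun ⟨k, e, b⟩ => ?_
  by_cases hb : b i <;> simp [opParO_fmono, opDivE_fmono, hb]

lemma cntB_update_true {b : Fin n → Bool} {i : Fin n} (hb : b i = false) (j : Fin n) :
    cntB (Function.update b i true) j = cntB b j + if i < j then 1 else 0 := by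
  by_cases hij : i < j
  · have hfilter : (Finset.univ.filter fun k => k < j ∧ Function.update b i true k = true) =
        insert i (Finset.univ.filter fun k => k < j ∧ b k = true) := by
      ext k
      rcases eq_or_ne k i with rfl | hk <;> simp_all
    rw [cntB, hfilter, Finset.card_insert_of_notMem (by simp [hb]), if_pos hij, cntB]
  · have hfilter : (Finset.univ.filter fun k => k < j ∧ Function.update b i true k = true) =
        Finset.univ.filter fun k => k < j ∧ b k = true := by
      ext k
      rcases eq_or_ne k i with rfl | hk <;> simp_all
    rw [cntB, hfilter, if_neg hij, add_zero, cntB]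

lemma neg_one_pow_cntB_flip (b : Fin n → Bool) (i j : Fin n) :
    (-1 : ℂ) ^ cntB (Function.update b i !b i) j = (if i < j then -1 else 1) * (-1) ^ cntB b j := by
  cases hb : b i
  · rw [Bool.not_false, cntB_update_true hb]
    split_ifs <;> simp [pow_succ]
  · have hcount := cntB_update_true (b := Function.update b i false) (i := i) (by simp) j
    rw [Function.update_idem, Function.update_eq_self_iff.mpr hb.symm] at hcount
    rw [Bool.not_true, hcount]
    split_ifs <;> simp [pow_succ]

lemma neg_one_pow_cntB_anticomm (b : Fin n → Bool) {i j : Fin n} (hij : i ≠ j) :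
    (-1 : ℂ) ^ cntB b j * (-1) ^ cntB (Function.update b j !b j) i +
      (-1) ^ cntB b i * (-1) ^ cntB (Function.update b i !b i) j = 0 := by
  rw [neg_one_pow_cntB_flip, neg_one_pow_cntB_flip]
  rcases lt_or_gt_of_ne hij with h | h <;> simp only [h, not_lt_of_gt h, if_true, if_false] <;> ring

lemma opDivO_anticomm (i j : Fin n) :
    opDivO i * opDivO j + opDivO j * opDivO i = (0 : Module.End ℂ (FSp m n)) := by
  refine end_ext_fmono fun ⟨k, e, b⟩ => ?_
  rcases eq_or_ne i j with rfl | h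
  · cases hb : b i <;> simp [opDivO_fmono, hb]
  · have hsign := neg_one_pow_cntB_anticomm b h
    cases hi : b i <;> cases hj : b j <;>
      simp_all [opDivO_fmono, Function.update_comm h, h.symm, smul_smul, ← add_smul]

lemma opParO_anticomm (i j : Fin n) :
    opParO i * opParO j + opParO j * opParO i = (0 : Module.End ℂ (FSp m n)) := by
  refine end_ext_fmono fun ⟨k, e, b⟩ => ?_
  rcases eq_or_ne i j with rfl | h
  · cases hb : b i <;> simp [opParO_fmono, hb]
  · have hsign := neg_one_pow_cntB_anticomm b h
    cases hi : b i <;> cases hj : b j <;>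
      simp_all [opParO_fmono, Function.update_comm h, h.symm, smul_smul, ← add_smul]

lemma opParO_anticomm_opDivO (i j : Fin n) :
    opParO i * opDivO j + opDivO j * opParO i =
      (if i = j then 1 else 0 : Module.End ℂ (FSp m n)) := by
  refine end_ext_fmono fun ⟨k, e, b⟩ => ?_
  rcases eq_or_ne i j with rfl | h
  · have hflip := neg_one_pow_cntB_flip b i i
    cases hb : b i
    · have hself : Function.update b i false = b := Function.update_eq_self_iff.mpr hb.symm
      simp_all [-Function.update_eq_self_iff, opParO_fmono, opDivO_fmono, smul_smul, ← mul_pow]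
    · have hself : Function.update b i true = b := Function.update_eq_self_iff.mpr hb.symm
      simp_all [-Function.update_eq_self_iff, opParO_fmono, opDivO_fmono, smul_smul, ← mul_pow]
  · have hsign := neg_one_pow_cntB_anticomm b h
    cases hi : b i <;> cases hj : b j <;>
      simp_all [opParO_fmono, opDivO_fmono, Function.update_comm h, h.symm, smul_smul,
        ← add_smul]

lemma opPar0_bracket_opDiv (a : Ind m n) : opPar0 * opDiv a - opDiv a * opPar0 = -opDiv a := by
  refine end_ext_fmono fun ⟨k, e, b⟩ => ?_
  rcases a with i | i
  · simp [opDiv, opPar0_fmono, opDivE_fmono, sub_smul]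
  · by_cases hb : b i
    · simp [opDiv, opPar0_fmono, opDivO_fmono, hb]
    · simp only [opDiv, Sum.elim_inr, LinearMap.sub_apply, Module.End.mul_apply, opDivO_fmono, hb,
        Bool.false_eq_true, if_false, map_smul, opPar0_fmono, Int.cast_sub, Int.cast_one,
        LinearMap.neg_apply]
      module

lemma opPar0_bracket_opPar (a : Ind m n) :
    opPar0 * opPar (emb a) - opPar (emb a) * opPar0 = opPar (emb a) := by
  refine end_ext_fmono fun ⟨k, e, b⟩ => ?_
  rcases a with i | i
  · simp only [opPar, emb, Sum.map_inl, Sum.elim_inl, Fin.cases_succ, LinearMap.sub_apply,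
      Module.End.mul_apply, opParE_fmono, map_smul, opPar0_fmono, Int.cast_add, Int.cast_one]
    module
  · by_cases hb : b i
    · simp only [opPar, emb, Sum.map_inr, id_eq, Sum.elim_inr, LinearMap.sub_apply,
        Module.End.mul_apply, opParO_fmono, hb, if_true, map_smul, opPar0_fmono, Int.cast_add,
        Int.cast_one]
      module
    · simp [opPar, emb, opPar0_fmono, opParO_fmono, hb]

lemma superBracket_opDiv_opDiv (a b : Ind m n) :
    superBracket (pI a) (pI b) (opDiv a) (opDiv b) = 0 := by
  rcases a with i | i <;> rcases b with j | j
  · exact (superBracket_zero_left _ _ _).trans (sub_eq_zero.mpr (commute_opDivE i j))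
  · exact (superBracket_zero_left _ _ _).trans (sub_eq_zero.mpr (commute_opDivE_opDivO i j))
  · exact (superBracket_zero_right _ _ _).trans (sub_eq_zero.mpr (commute_opDivE_opDivO j i).symm)
  · exact (superBracket_one_one _ _).trans (opDivO_anticomm i j)

lemma superBracket_opPar_opPar (a b : Ind m n) :
    superBracket (pI a) (pI b) (opPar (emb a) : Module.End ℂ (FSp m n)) (opPar (emb b)) = 0 := by
  rcases a with i | i <;> rcases b with j | j
  · exact (superBracket_zero_left _ _ _).trans (sub_eq_zero.mpr (commute_opParE i j))
  · exact (superBracket_zero_left _ _ _).trans (sub_eq_zero.mpr (commute_opParE_opParO i j))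
  · exact (superBracket_zero_right _ _ _).trans (sub_eq_zero.mpr (commute_opParE_opParO j i).symm)
  · exact (superBracket_one_one _ _).trans (opParO_anticomm i j)

lemma superBracket_opPar_opDiv (a b : Ind m n) :
    superBracket (pI a) (pI b) (opPar (emb a)) (opDiv b) = if a = b then 1 else 0 := by
  rcases a with i | i <;> rcases b with j | j
  · simp only [Sum.inl.injEq]
    exact (superBracket_zero_left _ _ _).trans (opParE_bracket_opDivE i j)
  · exact (superBracket_zero_left _ _ _).trans (sub_eq_zero.mpr (commute_opParE_opDivO i j))
  · exact (superBracket_zero_right _ _ _).trans (sub_eq_zero.mpr (commute_opParO_opDivE i j))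
  · simp only [Sum.inr.injEq]
    exact (superBracket_one_one _ _).trans (opParO_anticomm_opDivO i j)

lemma opDivB_z0 : (opDivB z0 : Module.End ℂ (FSp m n)) = 1 := rfl

lemma opDivB_emb (a : Ind m n) : opDivB (emb a) = opDiv a := by cases a <;> rfl

lemma opPar_z0 : (opPar z0 : Module.End ℂ (FSp m n)) = opPar0 := rfl

lemma isAffineWeylPair_opDivB_opPar :
    IsAffineWeylPair pI z0 (opDivB : Ind (m + 1) n → Module.End ℂ (FSp m n)) opPar :=
  isAffineWeylPair_of_emb opDivB_z0
    (fun a b => by simpa only [opDivB_emb] using superBracket_opDiv_opDiv a b)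
    (fun a b => by simpa only [opDivB_emb] using superBracket_opPar_opDiv a b)
    superBracket_opPar_opPar
    (fun a => by simpa only [opDivB_emb, opPar_z0] using opPar0_bracket_opDiv a)
    opPar0_bracket_opPar

end Operators

section Dprime

variable {m n : ℕ}

lemma tdivB_z0 : (tdivB z0 : Dprime m n) = 1 := rfl

lemma tdivB_emb (a : Ind m n) : tdivB (emb a) = tdiv a := by cases a <;> rfl

lemma coe_tdivB (i : Ind (m + 1) n) : (tdivB i : Module.End ℂ (FSp m n)) = opDivB i := by
  cases i using ind_cases with
  | h0 => rfl
  | h1 a => rw [tdivB_emb, opDivB_emb]; rfl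

lemma isAffineWeylPair_tdivB_tpar :
    IsAffineWeylPair pI z0 (tdivB : Ind (m + 1) n → Dprime m n) tpar := by
  let f : Dprime m n →ₐ[ℂ] Module.End ℂ (FSp m n) := (Dprime m n).val
  have hf : Function.Injective f := fun _ _ => Subtype.ext
  have hX : (fun i : Ind (m + 1) n => f (tdivB i)) = opDivB := funext coe_tdivB
  exact IsAffineWeylPair.of_map hf (hX ▸ isAffineWeylPair_opDivB_opPar)

end Dprime

section Twisting

variable {m n : ℕ}

lemma sum_ind_eq {A : Type*} [AddCommMonoid A] (f : Ind (m + 1) n → A) :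
    ∑ i, f i = f z0 + ∑ a, f (emb a) := by
  rw [Fintype.sum_sum_type, Fin.sum_univ_succ, add_assoc, Fintype.sum_sum_type]
  rfl

/-- The twisting matrix with rows and columns `a, b ∈ I` given by `1 ⊗ e_ab`, with zero row at
the index `0`, and with column `0` making it annihilate the affine coordinates `t_i/t_0`. -/
def twistingMatrix (ST : SuperTensor m n) : Ind (m + 1) n → Ind (m + 1) n → ST.T :=
  Function.extend emb
    (fun a => Function.extend emb (fun b => ST.inU (gen pI a b)) fun _ =>
      -∑ j, koszulSign (pI a) (pI j) • (ST.inD (tdiv j) * ST.inU (gen pI a j)))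
    0

lemma twistingMatrix_emb_emb (ST : SuperTensor m n) (a b : Ind m n) :
    twistingMatrix ST (emb a) (emb b) = ST.inU (gen pI a b) := by
  rw [twistingMatrix, emb_injective.extend_apply, emb_injective.extend_apply]

lemma twistingMatrix_emb_z0 (ST : SuperTensor m n) (a : Ind m n) :
    twistingMatrix ST (emb a) z0 =
      -∑ j, koszulSign (pI a) (pI j) • (ST.inD (tdiv j) * ST.inU (gen pI a j)) := by
  rw [twistingMatrix, emb_injective.extend_apply,
    Function.extend_apply' _ _ _ fun ⟨b, hb⟩ => emb_ne_z0 b hb]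

lemma twistingMatrix_z0 (ST : SuperTensor m n) (j : Ind (m + 1) n) :
    twistingMatrix ST z0 j = 0 := by
  rw [twistingMatrix, Function.extend_apply' _ _ _ fun ⟨b, hb⟩ => emb_ne_z0 b hb, Pi.zero_apply,
    Pi.zero_apply]

lemma inU_gen_bracket_tdivB (ST : SuperTensor m n) (a b : Ind m n) (k : Ind (m + 1) n) :
    superBracket (pI a + pI b) (pI k) (ST.inU (gen pI a b)) (ST.inD (tdivB k)) = 0 := by
  cases k using ind_cases with
  | h0 => simp [tdivB_z0, pI_z0, superBracket_zero_right]
  | h1 c =>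
    rw [tdivB_emb, pI_emb, superBracket_eq_zero_iff]
    exact ST.comm_div a b c

lemma inU_gen_bracket_tpar (ST : SuperTensor m n) (a b : Ind m n) (k : Ind (m + 1) n) :
    superBracket (pI a + pI b) (pI k) (ST.inU (gen pI a b)) (ST.inD (tpar k)) = 0 :=
  superBracket_eq_zero_iff.mpr (ST.comm_par a b k)

lemma isTwistingMatrix_twistingMatrix (ST : SuperTensor m n) :
    IsTwistingMatrix pI z0 (fun i => ST.inD (tdivB i)) (fun i => ST.inD (tpar i))
      (twistingMatrix ST) where
  toIsAffineWeylPair := isAffineWeylPair_tdivB_tpar.map ST.inD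
  sum_row k := by
    cases k using ind_cases with
    | h0 => simp [twistingMatrix_z0]
    | h1 a =>
      simp only [sum_ind_eq, twistingMatrix_emb_z0, twistingMatrix_emb_emb, pI_z0, pI_emb,
        tdivB_z0, tdivB_emb, koszulSign_zero_right, one_smul, map_one, one_mul, neg_add_cancel]
  X_u i k l hl := by
    cases l using ind_cases with
    | h0 => exact absurd rfl hl
    | h1 b =>
    cases k using ind_cases with
    | h0 => simp [twistingMatrix_z0]
    | h1 a =>
      rw [twistingMatrix_emb_emb, pI_emb, pI_emb, superBracket_swap, inU_gen_bracket_tdivB,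
        smul_zero, neg_zero]
  D_u i k l hl := by
    cases l using ind_cases with
    | h0 => exact absurd rfl hl
    | h1 b =>
    cases k using ind_cases with
    | h0 => simp [twistingMatrix_z0]
    | h1 a =>
      rw [twistingMatrix_emb_emb, pI_emb, pI_emb, superBracket_swap, inU_gen_bracket_tpar,
        smul_zero, neg_zero]
  u_u i j k l hj hl := by
    cases j using ind_cases with
    | h0 => exact absurd rfl hj
    | h1 b =>
    cases l using ind_cases with
    | h0 => exact absurd rfl hl
    | h1 d =>
    cases i using ind_cases <;> cases k using ind_cases
    case h1.h1 a c =>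
      simpa only [glBracket, twistingMatrix_emb_emb, pI_emb, emb_injective.eq_iff] using
        (isGlFamily_gen pI).map ST.inU a b c d
    all_goals simp [glBracket, twistingMatrix_z0, emb_ne_z0]

end Twisting

/-- Theorem 3.1.  For any central element `R` of
`D'(m|n) ⊗ U(gl(m|n))`, the correspondence
`e_ab ↦ t_a∂_b⊗1 + 1⊗e_ab + δ_ab(−1)^{|a||b|}R`,
`e_a0 ↦ t_a∂_0⊗1 − Σ_j(−1)^{|a||j|}(t_j/t_0)⊗e_aj`,
`e_0b ↦ t_0∂_b⊗1`, `e_00 ↦ t_0∂_0⊗1 + R`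
extends to a superalgebra homomorphism `φ_R : U(gl(m+1|n)) → D'(m|n)⊗U(gl(m|n))`. -/
theorem stmt2 (m n : ℕ) (ST : SuperTensor m n) (R : ST.T)
    (hR : R ∈ Subalgebra.center ℂ ST.T) :
    ∃ φ : UEA (Ind (m+1) n) pI →ₐ[ℂ] ST.T, IsPhi ST R φ := by
  obtain ⟨φ, hφ⟩ :=
    ((isTwistingMatrix_twistingMatrix ST).isGlFamily_vectorField_add.add_diagonal fun _ _ =>
      Subalgebra.mem_center_iff.mp hR _).exists_algHom
  simp only [← map_mul] at hφ
  refine ⟨φ, fun a b => ?_, fun a => ?_, fun b => ?_, ?_⟩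
  · simp only [hφ, twistingMatrix_emb_emb, emb_injective.eq_iff, pI_emb, koszulSign, tdel]
  · simp [hφ, twistingMatrix_emb_z0, emb_ne_z0, koszulSign, tdel, sub_eq_add_neg]
  · simp [hφ, twistingMatrix_z0, (emb_ne_z0 b).symm, tdel]
  · simp [hφ, twistingMatrix_z0, pI_z0, tdel]
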